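/- Let δ ∈ ℝ and 0 < ρ < 1, and let e^{μ,δ}_{1,ρ}(z) = Σ_{n=0}^∞ z^n/(Γ(n+μ)·Γ(δ−ρn)). Then for every z ∈ ℝ one has e^{1,δ−1}_{1,ρ}(z) + (1−δ)·e^{1,δ}_{1,ρ}(z) = −ρ·z·e^{1,δ−ρ}_{1,ρ}(z). -/

import Mathlib

/- The Wright-type function `e^{μ,δ}_{1,ρ}(z) = Σ_{n≥0} zⁿ/(Γ(n+μ)·Γ(δ−ρn))`;
`Real.Gamma` vanishes at nonpositive integers, realizing the convention `1/Γ = 0` there. -/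
noncomputable def wrightE (ρ μ δ z : ℝ) : ℝ :=
  ∑' n : ℕ, z ^ n / (Real.Gamma ((n : ℝ) + μ) * Real.Gamma (δ - ρ * n))

/-- Log-convexity of `Γ` bounds its growth over a step of length `ρ < 1`. -/
theorem Real.Gamma_add_le_rpow_mul_Gamma {x ρ : ℝ} (hx : 0 < x) (hρ0 : 0 < ρ) (hρ1 : ρ < 1) :
    Real.Gamma (x + ρ) ≤ x ^ ρ * Real.Gamma x := by
  have hΓ := Real.Gamma_pos_of_pos hx
  have h := Real.Gamma_mul_add_mul_le_rpow_Gamma_mul_rpow_Gamma hx (by linarith : 0 < x + 1)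
    (sub_pos.2 hρ1) hρ0 (by ring)
  rw [Real.Gamma_add_one hx.ne', Real.mul_rpow hx.le hΓ.le] at h
  calc Real.Gamma (x + ρ) = Real.Gamma ((1 - ρ) * x + ρ * (x + 1)) := by ring_nf
    _ ≤ _ := h
    _ = x ^ ρ * (Real.Gamma x ^ (1 - ρ) * Real.Gamma x ^ ρ) := by ring
    _ = x ^ ρ * Real.Gamma x := by
      rw [← Real.rpow_add hΓ, sub_add_cancel, Real.rpow_one]

/-- Euler's reflection formula bounds the reciprocal of `Γ` to the left of `1`. -/
theorem Real.abs_inv_Gamma_le {s : ℝ} (hs : s < 1) :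
    |(Real.Gamma s)⁻¹| ≤ Real.Gamma (1 - s) := by
  have hpos : 0 < Real.Gamma (1 - s) := Real.Gamma_pos_of_pos (by linarith)
  have h := Real.Gamma_mul_Gamma_one_sub s
  by_cases hΓ : Real.Gamma s = 0
  · simpa [hΓ] using hpos.le
  have hsin : Real.sin (Real.pi * s) ≠ 0 := by
    intro h0
    rw [h0, div_zero] at h
    exact (mul_ne_zero hΓ hpos.ne') h
  have hinv : (Real.Gamma s)⁻¹ = Real.Gamma (1 - s) * (Real.sin (Real.pi * s) / Real.pi) := by
    rw [eq_div_iff hsin] at h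
    refine inv_eq_of_mul_eq_one_right ?_
    rw [← mul_div_assoc, ← mul_div_assoc, ← mul_assoc, h, div_self Real.pi_ne_zero]
  have hle : |Real.sin (Real.pi * s) / Real.pi| ≤ 1 := by
    rw [abs_div, abs_of_pos Real.pi_pos, div_le_one Real.pi_pos]
    linarith [Real.abs_sin_le_one (Real.pi * s), Real.pi_gt_three]
  rw [hinv, abs_mul, abs_of_pos hpos]
  exact mul_le_of_le_one_right hpos.le hle

/-- The recurrence `1 / Γ(s - 1) = (s - 1) / Γ(s)` holds at every real `s`, poles included. -/
theorem Real.inv_Gamma_sub_one (s : ℝ) :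
    (Real.Gamma (s - 1))⁻¹ = (s - 1) * (Real.Gamma s)⁻¹ := by
  by_cases hs : s - 1 = 0
  · simp [hs, Real.Gamma_zero]
  · have h := Real.Gamma_add_one hs
    rw [sub_add_cancel] at h
    rw [h, mul_inv, mul_inv_cancel_left₀ hs]

open Filter in
theorem tendsto_add_mul_natCast_atTop (a : ℝ) {ρ : ℝ} (hρ0 : 0 < ρ) :
    Tendsto (fun n : ℕ => a + ρ * (n : ℝ)) atTop atTop :=
  tendsto_atTop_add_const_left _ a (tendsto_natCast_atTop_atTop.const_mul_atTop hρ0)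

open Filter in
theorem summable_pow_mul_Gamma_div_factorial (a z : ℝ) {ρ : ℝ} (hρ0 : 0 < ρ) (hρ1 : ρ < 1) :
    Summable fun n : ℕ => |z| ^ n * Real.Gamma (a + ρ * n) / (n.factorial : ℝ) := by
  have hx := tendsto_add_mul_natCast_atTop a hρ0
  have hsmall : Tendsto (fun n : ℕ => |z| * (a + ρ * (n : ℝ)) ^ (-(1 - ρ))) atTop
      (nhds 0) := by
    simpa using ((tendsto_rpow_neg_atTop (sub_pos.2 hρ1)).comp hx).const_mul |z|
  have hlin := tendsto_add_mul_natCast_atTop (-a) (sub_pos.2 hρ1)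
  refine summable_of_ratio_norm_eventually_le (r := 1 / 2) (by norm_num) ?_
  filter_upwards [hx.eventually_gt_atTop 0, hlin.eventually_ge_atTop 0,
    hsmall.eventually_le_const (by norm_num : (0 : ℝ) < 1 / 2)] with n hpos hle hhalf
  set x := a + ρ * (n : ℝ)
  have hΓ := Real.Gamma_pos_of_pos hpos
  have hstep : a + ρ * ((n + 1 : ℕ) : ℝ) = x + ρ := by push_cast; ring
  have hΓ' : 0 < Real.Gamma (x + ρ) := Real.Gamma_pos_of_pos (by linarith)
  have hxρ : x ^ ρ = x ^ (-(1 - ρ)) * x := by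
    rw [← Real.rpow_add_one hpos.ne']
    ring_nf
  have hratio : |z| * x ^ ρ ≤ 1 / 2 * ((n : ℝ) + 1) := by
    rw [hxρ, ← mul_assoc]
    exact mul_le_mul hhalf (by linarith) hpos.le (by norm_num)
  rw [hstep, Real.norm_of_nonneg (by positivity), Real.norm_of_nonneg (by positivity),
    Nat.factorial_succ, div_le_iff₀ (by positivity)]
  push_cast
  calc |z| ^ (n + 1) * Real.Gamma (x + ρ)
      ≤ |z| ^ (n + 1) * (x ^ ρ * Real.Gamma x) := by
        gcongr
        exact Real.Gamma_add_le_rpow_mul_Gamma hpos hρ0 hρ1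
    _ = (|z| * x ^ ρ) * (|z| ^ n * Real.Gamma x) := by ring
    _ ≤ (1 / 2 * ((n : ℝ) + 1)) * (|z| ^ n * Real.Gamma x) := by gcongr
    _ = _ := by field_simp

open Filter in
theorem summable_wrightE_one (δ z : ℝ) {ρ : ℝ} (hρ0 : 0 < ρ) (hρ1 : ρ < 1) :
    Summable fun n : ℕ =>
      z ^ n / (Real.Gamma ((n : ℝ) + 1) * Real.Gamma (δ - ρ * n)) := by
  refine (summable_pow_mul_Gamma_div_factorial (1 - δ) z hρ0 hρ1).of_norm_bounded_eventually_nat ?_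
  filter_upwards [(tendsto_add_mul_natCast_atTop (1 - δ) hρ0).eventually_gt_atTop 0] with n hn
  have h := Real.abs_inv_Gamma_le (s := δ - ρ * n) (by linarith)
  rw [show 1 - (δ - ρ * n) = 1 - δ + ρ * n by ring] at h
  rw [Real.Gamma_nat_eq_factorial, Real.norm_eq_abs, div_eq_mul_inv, mul_inv, abs_mul, abs_mul,
    abs_pow, abs_of_nonneg (by positivity : (0 : ℝ) ≤ (n.factorial : ℝ)⁻¹)]
  calc |z| ^ n * ((n.factorial : ℝ)⁻¹ * |(Real.Gamma (δ - ρ * n))⁻¹|)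
      ≤ |z| ^ n * ((n.factorial : ℝ)⁻¹ * Real.Gamma (1 - δ + ρ * n)) := by gcongr
    _ = _ := by ring

/- STATEMENT 9: the recurrence
`e^{1,δ−1}_{1,ρ}(z) + (1−δ)·e^{1,δ}_{1,ρ}(z) = −ρ·z·e^{1,δ−ρ}_{1,ρ}(z)`. -/
theorem wright_recurrence (δ ρ : ℝ) (hρ0 : 0 < ρ) (hρ1 : ρ < 1) (z : ℝ) :
    wrightE ρ 1 (δ - 1) z + (1 - δ) * wrightE ρ 1 δ z =
      -(ρ * z * wrightE ρ 1 (δ - ρ) z) := by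
  have hsum₁ := summable_wrightE_one (δ - 1) z hρ0 hρ1
  have hsum₂ := (summable_wrightE_one δ z hρ0 hρ1).mul_left (1 - δ)
  unfold wrightE
  rw [← tsum_mul_left, ← hsum₁.tsum_add hsum₂, (hsum₁.add hsum₂).tsum_eq_zero_add,
    ← tsum_mul_left, ← tsum_neg]
  have hterm : ∀ n : ℕ,
      z ^ n / (Real.Gamma ((n : ℝ) + 1) * Real.Gamma (δ - 1 - ρ * n)) +
        (1 - δ) * (z ^ n / (Real.Gamma ((n : ℝ) + 1) * Real.Gamma (δ - ρ * n))) =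
      -(ρ * n * (z ^ n * ((n.factorial : ℝ)⁻¹ * (Real.Gamma (δ - ρ * n))⁻¹))) := by
    intro n
    rw [Real.Gamma_nat_eq_factorial, show δ - 1 - ρ * n = δ - ρ * n - 1 by ring, div_eq_mul_inv,
      div_eq_mul_inv, mul_inv, mul_inv, Real.inv_Gamma_sub_one]
    ring
  simp only [hterm]
  rw [Nat.cast_zero, mul_zero, zero_mul, neg_zero, zero_add]
  refine tsum_congr fun n => ?_
  rw [Real.Gamma_nat_eq_factorial, Nat.factorial_succ, div_eq_mul_inv, mul_inv,
    show δ - ρ * ((n + 1 : ℕ) : ℝ) = δ - ρ - ρ * n by push_cast; ring]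
  have hn : ((n : ℝ) + 1) ≠ 0 := by positivity
  push_cast
  rw [mul_inv, pow_succ]
  field_simp
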